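/- arXiv:1707.02278 — 6 statements merged into one kernel-verified Lean document; each statement's English description precedes it below -/
import Mathlib

section
/- Let f : ℝ^N → (−∞,∞] be proper, closed and convex, and let h : ℝ^N → ℝ be convex and differentiable. Let x̄ ∈ ℝ^N and suppose x̂ is a global minimizer of the function u ↦ f(u) + D_h(u, x̄). Then for every x ∈ dom f the three point inequality holds: f(x) + D_h(x, x̄) ≥ f(x̂) + D_h(x̂, x̄) + D_h(x, x̂). -/
open scoped RealInnerProductSpace
open Filter Topology

/-- The Bregman distance `D_h(x, u) = h x − h u − ⟨∇h u, x − u⟩` associated with `h`. -/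
noncomputable def breg {N : ℕ} (h : EuclideanSpace ℝ (Fin N) → ℝ)
    (x u : EuclideanSpace ℝ (Fin N)) : ℝ :=
  h x - h u - ⟪gradient h u, x - u⟫

/-- Convexity for extended-real-valued functions. -/
def ERealConvex {N : ℕ} (f : EuclideanSpace ℝ (Fin N) → EReal) : Prop :=
  ∀ x y : EuclideanSpace ℝ (Fin N), ∀ a b : ℝ, 0 ≤ a → 0 ≤ b → a + b = 1 →
    f (a • x + b • y) ≤ (a : EReal) * f x + (b : EReal) * f y

/-- **Three point inequality.** If `f` is proper closed convex, `h` is convex differentiable,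
and `x̂` globally minimizes `u ↦ f u + D_h(u, x̄)`, then for every `x ∈ dom f`:
`f x + D_h(x, x̄) ≥ f x̂ + D_h(x̂, x̄) + D_h(x, x̂)`. -/
theorem bregman_three_point_inequality (N : ℕ)
    (f : EuclideanSpace ℝ (Fin N) → EReal)
    (hfbot : ∀ z, f z ≠ ⊥) (hfproper : ∃ z, f z ≠ ⊤)
    (hfclosed : LowerSemicontinuous f) (hfconv : ERealConvex f)
    (h : EuclideanSpace ℝ (Fin N) → ℝ)
    (hhconv : ConvexOn ℝ Set.univ h) (hhdiff : Differentiable ℝ h)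
    (xb xh : EuclideanSpace ℝ (Fin N))
    (hmin : ∀ u, f xh + ((breg h xh xb : ℝ) : EReal) ≤ f u + ((breg h u xb : ℝ) : EReal)) :
    ∀ x, f x ≠ ⊤ →
      f xh + ((breg h xh xb : ℝ) : EReal) + ((breg h x xh : ℝ) : EReal) ≤
        f x + ((breg h x xb : ℝ) : EReal) := by
  intro x hx
  have hxh : f xh ≠ ⊤ := by
    intro ht
    have h1 := hmin x
    rw [ht, EReal.top_add_coe, top_le_iff] at h1
    lift f x to ℝ using ⟨hx, hfbot x⟩ with F
    rw [← EReal.coe_add] at h1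
    exact EReal.coe_ne_top _ h1
  obtain ⟨F, hF⟩ : ∃ F : ℝ, f x = F := ⟨(f x).toReal, (EReal.coe_toReal hx (hfbot x)).symm⟩
  obtain ⟨G, hG⟩ : ∃ G : ℝ, f xh = G := ⟨(f xh).toReal, (EReal.coe_toReal hxh (hfbot xh)).symm⟩
  have key : ∀ t : ℝ, 0 < t → t < 1 →
      0 ≤ t * (F - G) + (h (xh + t • (x - xh)) - h xh) - t * ⟪gradient h xb, x - xh⟫ := by
    intro t ht0 ht1
    have h1 := hfconv xh x (1 - t) t (by linarith) ht0.le (by ring)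
    have hz : (1 - t) • xh + t • x = xh + t • (x - xh) := by module
    have h2 := hmin (xh + t • (x - xh))
    rw [hz, hF, hG, ← EReal.coe_mul, ← EReal.coe_mul, ← EReal.coe_add] at h1
    have h3 := h2.trans (add_le_add_left h1 _)
    rw [hG, ← EReal.coe_add, ← EReal.coe_add, EReal.coe_le_coe_iff] at h3
    have h4 : xh + t • (x - xh) - xb = (xh - xb) + t • (x - xh) := by module
    simp only [breg, h4, inner_add_right, inner_smul_right] at h3
    linarith
  have hd : HasDerivAt (fun t : ℝ => h (xh + t • (x - xh))) ⟪gradient h xh, x - xh⟫ 0 := by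
    have h1 : HasFDerivAt h (InnerProductSpace.toDual ℝ _ (gradient h xh))
        (xh + (0 : ℝ) • (x - xh)) := by
      simpa using (hhdiff xh).hasGradientAt.hasFDerivAt
    have h2 : HasDerivAt (fun t : ℝ => xh + t • (x - xh)) (x - xh) 0 := by
      simpa using ((hasDerivAt_id (0 : ℝ)).smul_const (x - xh)).const_add xh
    exact h1.comp_hasDerivAt (0 : ℝ) h2
  have hlim := hd.tendsto_slope_zero_right
  have hge : ⟪gradient h xb, x - xh⟫ - (F - G) ≤ ⟪gradient h xh, x - xh⟫ := by
    refine ge_of_tendsto hlim ?_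
    filter_upwards [Ioo_mem_nhdsGT (zero_lt_one' ℝ)] with t ht
    have h1 := key t ht.1 ht.2
    simp only [zero_add, zero_smul, add_zero, smul_eq_mul]
    rw [inv_mul_eq_div, le_div_iff₀ ht.1]
    linarith
  rw [hF, hG, ← EReal.coe_add, ← EReal.coe_add, ← EReal.coe_add, EReal.coe_le_coe_iff]
  have h4 : x - xb = (xh - xb) + (x - xh) := by module
  simp only [breg, h4, inner_add_right]
  linarith
end

section
/- Let f : ℝ^N → (−∞,∞] be proper, x̄ ∈ dom f, and let m : ℝ^N → (−∞,∞] be a proper, closed, convex model function satisfying |f(x) − m(x)| ≤ ω(‖x − x̄‖) for all x ∈ ℝ^N, where ω is a growth function. Let h : ℝ^N → ℝ be convex and differentiable, so that D_h ≥ 0. Fix δ, γ ∈ (0,1) and η̃ > 0, and suppose ŷ ∈ ℝ^N satisfies Δ := m(ŷ) + D_h(ŷ, x̄) − f(x̄) < 0. Then there exists j ∈ ℕ such that, with η_j := η̃·δ^j, the Armijo-type descent condition f(x̄ + η_j(ŷ − x̄)) ≤ f(x̄) + γ·η_j·Δ holds. -/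
open scoped RealInnerProductSpace
open Filter Topology

theorem breg_nonneg_aux {N : ℕ} (h : EuclideanSpace ℝ (Fin N) → ℝ)
    (hhconv : ConvexOn ℝ Set.univ h) (hhdiff : Differentiable ℝ h)
    (x u : EuclideanSpace ℝ (Fin N)) : 0 ≤ breg h x u := by
  have hc : ConvexOn ℝ Set.univ (fun t : ℝ => h (AffineMap.lineMap u x t)) :=
    hhconv.comp_affineMap (AffineMap.lineMap u x)
  have hg : HasFDerivAt h (fderiv ℝ h u) (AffineMap.lineMap u x (0:ℝ)) := by
    rw [AffineMap.lineMap_apply_zero]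
    exact (hhdiff u).hasFDerivAt
  have hd : HasDerivAt (fun t : ℝ => h (AffineMap.lineMap u x t)) (fderiv ℝ h u (x - u)) 0 :=
    hg.comp_hasDerivAt (0:ℝ) AffineMap.hasDerivAt_lineMap
  have hs := hc.le_slope_of_hasDerivAt (Set.mem_univ 0) (Set.mem_univ 1) zero_lt_one hd
  have hi : ⟪gradient h u, x - u⟫ = fderiv ℝ h u (x - u) := by
    simp [gradient]
  simp [slope] at hs
  simp only [map_sub] at hi
  unfold breg
  linarith

/-- **Finite termination of the Armijo-like line search.** Given a proper `f`, a point
`x̄ ∈ dom f`, a proper closed convex model `m` with `|f − m| ≤ ω(‖· − x̄‖)` for a growth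
function `ω`, a convex differentiable `h`, parameters `δ, γ ∈ (0,1)`, `η̃ > 0`, and a point
`ŷ` with `Δ := m ŷ + D_h(ŷ, x̄) − f x̄ < 0`, there exists `j ∈ ℕ` such that, with
`η_j = η̃ δ^j`, one has `f(x̄ + η_j (ŷ − x̄)) ≤ f x̄ + γ η_j Δ`. -/
theorem line_search_finite_termination (N : ℕ)
    (f : EuclideanSpace ℝ (Fin N) → EReal)
    (hfbot : ∀ z, f z ≠ ⊥) (hfproper : ∃ z, f z ≠ ⊤)
    (xb : EuclideanSpace ℝ (Fin N)) (hxb : f xb ≠ ⊤)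
    (m : EuclideanSpace ℝ (Fin N) → EReal)
    (hmbot : ∀ z, m z ≠ ⊥) (hmproper : ∃ z, m z ≠ ⊤)
    (hmclosed : LowerSemicontinuous m) (hmconv : ERealConvex m)
    (ω : ℝ → ℝ) (hω0 : ω 0 = 0) (hωnn : ∀ t, 0 ≤ t → 0 ≤ ω t)
    (hωgrowth : Tendsto (fun t => ω t / t) (𝓝[>] (0:ℝ)) (𝓝 0))
    (hmodel : ∀ x, f x - m x ≤ ((ω ‖x - xb‖ : ℝ) : EReal) ∧
                   m x - f x ≤ ((ω ‖x - xb‖ : ℝ) : EReal))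
    (h : EuclideanSpace ℝ (Fin N) → ℝ)
    (hhconv : ConvexOn ℝ Set.univ h) (hhdiff : Differentiable ℝ h)
    (δ γ : ℝ) (hδ : δ ∈ Set.Ioo (0:ℝ) 1) (hγ : γ ∈ Set.Ioo (0:ℝ) 1)
    (ηt : ℝ) (hηt : 0 < ηt)
    (yh : EuclideanSpace ℝ (Fin N)) (Δ : ℝ)
    (hΔdef : ((Δ : ℝ) : EReal) = m yh + ((breg h yh xb : ℝ) : EReal) - f xb)
    (hΔneg : Δ < 0) :
    ∃ j : ℕ, f (xb + (ηt * δ ^ j) • (yh - xb)) ≤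
      f xb + ((γ * (ηt * δ ^ j) * Δ : ℝ) : EReal) := by
  obtain ⟨hδ0, hδ1⟩ := hδ
  obtain ⟨hγ0, hγ1⟩ := hγ
  have hD := breg_nonneg_aux h hhconv hhdiff yh xb
  set D := breg h yh xb
  obtain ⟨F, hF⟩ : ∃ F : ℝ, f xb = (F : EReal) :=
    ⟨_, (EReal.coe_toReal hxb (hfbot xb)).symm⟩
  have hmyt : m yh ≠ ⊤ := by
    intro ht
    rw [ht, hF, EReal.top_add_coe, EReal.top_sub_coe] at hΔdef
    exact EReal.coe_ne_top _ hΔdef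
  obtain ⟨M, hM⟩ : ∃ M : ℝ, m yh = (M : EReal) :=
    ⟨_, (EReal.coe_toReal hmyt (hmbot yh)).symm⟩
  have hmx := (hmodel xb).2
  rw [hF, sub_self, norm_zero, hω0] at hmx
  have hmxt : m xb ≠ ⊤ := by
    intro ht
    rw [ht, EReal.top_sub_coe] at hmx
    exact EReal.coe_ne_top _ (top_le_iff.mp hmx)
  obtain ⟨G, hG⟩ : ∃ G : ℝ, m xb = (G : EReal) :=
    ⟨_, (EReal.coe_toReal hmxt (hmbot xb)).symm⟩
  rw [hG] at hmx
  have hGF : G ≤ F := by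
    have : G - F ≤ 0 := by exact_mod_cast hmx
    linarith
  have hΔ : Δ = M + D - F := by
    rw [hM, hF] at hΔdef
    exact_mod_cast hΔdef
  have hlim : Tendsto (fun j : ℕ => ηt * δ ^ j) atTop (𝓝 0) := by
    simpa using (tendsto_pow_atTop_nhds_zero_of_lt_one hδ0.le hδ1).const_mul ηt
  have hpos : ∀ j : ℕ, 0 < ηt * δ ^ j := fun j => by positivity
  have hle1 : ∀ᶠ j : ℕ in atTop, ηt * δ ^ j ≤ 1 :=
    hlim.eventually_le_const zero_lt_one
  have hωsmall : ∀ᶠ j : ℕ in atTop,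
      ω (ηt * δ ^ j * ‖yh - xb‖) ≤ -((1 - γ) * (ηt * δ ^ j) * Δ) := by
    have hc : 0 < -((1 - γ) * Δ) := by nlinarith
    rcases (norm_nonneg (yh - xb)).eq_or_lt with hd | hd
    · refine Eventually.of_forall fun j => ?_
      rw [← hd, mul_zero, hω0]
      nlinarith [hpos j]
    · have ht : Tendsto (fun j : ℕ => ηt * δ ^ j * ‖yh - xb‖) atTop (𝓝[>] 0) := by
        refine tendsto_nhdsWithin_iff.mpr ⟨by simpa using hlim.mul_const ‖yh - xb‖, ?_⟩
        exact Eventually.of_forall fun j => mul_pos (hpos j) hd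
      have hcd : 0 < -((1 - γ) * Δ) / ‖yh - xb‖ := div_pos hc hd
      filter_upwards [(hωgrowth.comp ht).eventually_le_const hcd] with j hj
      have hj' := (div_le_iff₀ (mul_pos (hpos j) hd)).mp hj
      refine hj'.trans (le_of_eq ?_)
      field_simp
  obtain ⟨j, hj1, hj2⟩ := (hle1.and hωsmall).exists
  refine ⟨j, ?_⟩
  have hη := hpos j
  set η := ηt * δ ^ j
  have hx : (1 - η) • xb + η • yh = xb + η • (yh - xb) := by module
  have hmc := hmconv xb yh (1 - η) η (by linarith) hη.le (by ring)
  have hm1 := (hmodel (xb + η • (yh - xb))).1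
  rw [add_sub_cancel_left, norm_smul, Real.norm_of_nonneg hη.le] at hm1
  rw [hx, hG, hM] at hmc
  set x := xb + η • (yh - xb)
  have hmc' : m x ≤ (((1 - η) * G + η * M : ℝ) : EReal) := by
    push_cast
    exact_mod_cast hmc
  have hmxt' : m x ≠ ⊤ := ne_top_of_le_ne_top (EReal.coe_ne_top _) hmc'
  obtain ⟨P, hP⟩ : ∃ P : ℝ, m x = (P : EReal) :=
    ⟨_, (EReal.coe_toReal hmxt' (hmbot x)).symm⟩
  rw [hP] at hm1 hmc'
  have hP' : P ≤ (1 - η) * G + η * M := by exact_mod_cast hmc'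
  have hft : f x ≠ ⊤ := by
    intro ht
    rw [ht, EReal.top_sub_coe] at hm1
    exact EReal.coe_ne_top _ (top_le_iff.mp hm1)
  obtain ⟨Q, hQ⟩ : ∃ Q : ℝ, f x = (Q : EReal) :=
    ⟨_, (EReal.coe_toReal hft (hfbot x)).symm⟩
  rw [hQ] at hm1 ⊢
  have hm1' : Q - P ≤ ω (η * ‖yh - xb‖) := by exact_mod_cast hm1
  rw [hF, ← EReal.coe_add, EReal.coe_le_coe_iff]
  have h1 : (1 - η) * G ≤ (1 - η) * F := mul_le_mul_of_nonneg_left hGF (by linarith)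
  have h2 : η * M ≤ η * (Δ + F) := mul_le_mul_of_nonneg_left (by linarith) hη.le
  linarith
end

section
/- Let f : ℝ^N → (−∞,∞] be proper and closed, x̄ ∈ dom f, and let m : ℝ^N → (−∞,∞] satisfy |f(x) − m(x)| ≤ ω(‖x − x̄‖) for all x ∈ ℝ^N, where ω is a growth function. Then the slopes of m and f at x̄ coincide: |∇m|(x̄) = |∇f|(x̄). -/
open Filter Topology

/-- The slope `|∇f|(x̄) = limsup_{x → x̄, x ≠ x̄} [f(x̄) − f(x)]₊ / ‖x − x̄‖` of an
extended-real-valued function `f` at `x̄`. -/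
noncomputable def slopeAt {N : ℕ} (f : EuclideanSpace ℝ (Fin N) → EReal)
    (xb : EuclideanSpace ℝ (Fin N)) : EReal :=
  Filter.limsup (fun x => (((max (f xb - f x) 0).toReal / ‖x - xb‖ : ℝ) : EReal)) (𝓝[≠] xb)

theorem limsup_le_of_sub_tendsto {α : Type*} {l : Filter α} (u v : α → ℝ)
    (h : Tendsto (fun x => u x - v x) l (𝓝 0)) :
    Filter.limsup (fun x => (u x : EReal)) l ≤ Filter.limsup (fun x => (v x : EReal)) l := by
  rcases l.eq_or_neBot with rfl | hl
  · simp
  have h0 : Tendsto (fun x => ((u x - v x : ℝ) : EReal)) l (𝓝 0) := by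
    have := (continuous_coe_real_ereal.tendsto 0).comp h
    simpa [Function.comp_def] using this
  have h1 := h0.limsup_eq
  have h2 : (fun x => (u x : EReal)) =
      (fun x => (v x : EReal)) + (fun x => ((u x - v x : ℝ) : EReal)) := by
    funext x
    rw [Pi.add_apply, ← EReal.coe_add]
    congr 1
    ring
  rw [h2]
  refine (EReal.limsup_add_le (Or.inr ?_) (Or.inr ?_)).trans ?_
  · rw [h1]; simp
  · rw [h1]; simp
  · rw [h1]; simp

/-- **Equality of slopes.** If `f` is proper and closed, `x̄ ∈ dom f`, and the model `m`
satisfies `|f − m| ≤ ω(‖· − x̄‖)` for a growth function `ω`, then `|∇m|(x̄) = |∇f|(x̄)`. -/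
theorem slope_model_eq_slope (N : ℕ)
    (f : EuclideanSpace ℝ (Fin N) → EReal)
    (hfbot : ∀ z, f z ≠ ⊥) (hfproper : ∃ z, f z ≠ ⊤)
    (hfclosed : LowerSemicontinuous f)
    (xb : EuclideanSpace ℝ (Fin N)) (hxb : f xb ≠ ⊤)
    (m : EuclideanSpace ℝ (Fin N) → EReal) (hmbot : ∀ z, m z ≠ ⊥)
    (ω : ℝ → ℝ) (hω0 : ω 0 = 0) (hωnn : ∀ t, 0 ≤ t → 0 ≤ ω t)
    (hωgrowth : Tendsto (fun t => ω t / t) (𝓝[>] (0:ℝ)) (𝓝 0))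
    (hmodel : ∀ x, f x - m x ≤ ((ω ‖x - xb‖ : ℝ) : EReal) ∧
                   m x - f x ≤ ((ω ‖x - xb‖ : ℝ) : EReal)) :
    slopeAt m xb = slopeAt f xb := by
  have hxx := hmodel xb
  have key : ∀ x, |(max (m xb - m x) 0).toReal - (max (f xb - f x) 0).toReal| ≤ ω ‖x - xb‖ := by
    intro x
    have hx := hmodel x
    have hb := hfbot xb
    have hmb := hmbot xb
    have hfx := hfbot x
    have hmx := hmbot x
    have hn := hωnn _ (norm_nonneg (x - xb))
    simp only [sub_self, norm_zero, hω0] at hxx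
    generalize ω ‖x - xb‖ = w at *
    generalize f xb = a at *
    generalize m xb = b at *
    generalize f x = c at *
    generalize m x = d at *
    have hcoe : ∀ r s : ℝ, (max ((r : EReal) - s) 0).toReal = max (r - s) 0 := by
      intro r s
      rw [← EReal.coe_sub, ← EReal.coe_zero, ← EReal.coe_strictMono.monotone.map_max, EReal.toReal_coe]
    induction a with
    | bot => exact absurd rfl hb
    | top => exact absurd rfl hxb
    | coe a =>
    induction b with
    | bot => exact absurd rfl hmb
    | top => simp at hxx
    | coe b =>
    have hab : a = b := by
      simp only [← EReal.coe_sub, EReal.coe_le_coe_iff] at hxx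
      linarith [hxx.1, hxx.2]
    subst hab
    induction c with
    | bot => exact absurd rfl hfx
    | top =>
      induction d with
      | bot => exact absurd rfl hmx
      | top => simpa using hn
      | coe d => simp at hx
    | coe c =>
      induction d with
      | bot => exact absurd rfl hmx
      | top => simp at hx
      | coe d =>
        simp only [← EReal.coe_sub, EReal.coe_le_coe_iff] at hx
        rw [hcoe, hcoe]
        refine (abs_max_sub_max_le_abs _ _ _).trans ?_
        rw [abs_le]
        constructor <;> linarith [hx.1, hx.2]
  have hnorm : Tendsto (fun x => ‖x - xb‖) (𝓝[≠] xb) (𝓝[>] (0:ℝ)) :=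
    tendsto_norm_sub_self_nhdsNE xb
  have hlim := hωgrowth.comp hnorm
  have hd : Tendsto (fun x => (max (m xb - m x) 0).toReal / ‖x - xb‖
      - (max (f xb - f x) 0).toReal / ‖x - xb‖) (𝓝[≠] xb) (𝓝 0) := by
    refine squeeze_zero_norm (fun x => ?_) hlim
    rw [← sub_div, Real.norm_eq_abs, abs_div, abs_norm]
    exact div_le_div_of_nonneg_right (key x) (norm_nonneg _)
  apply le_antisymm
  · exact limsup_le_of_sub_tendsto _ _ hd
  · refine limsup_le_of_sub_tendsto _ _ ?_
    simpa using hd.neg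
end

section
/- Let f : ℝ^N → (−∞,∞] be proper and closed with inf f > −∞. For each k ∈ ℕ let h_k : ℝ^N → ℝ be convex and differentiable, let m_k : ℝ^N → (−∞,∞] be proper, closed and convex with |f(x) − m_k(x)| ≤ ω(‖x − x^k‖) for all x ∈ ℝ^N, where ω is a growth function, and suppose x̂^k is a global minimizer of m_k + D_{h_k}(·, x^k). Suppose: (i) (x^k) and (ŷ^k) are bounded sequences in ℝ^N; (ii) m_k(ŷ^k) + D_{h_k}(ŷ^k, x^k) ≤ m_k(x̂^k) + D_{h_k}(x̂^k, x^k) + ε_k with ε_k → 0; (iii) Δ_k := m_k(ŷ^k) + D_{h_k}(ŷ^k, x^k) − f(x^k) → 0; and (iv) the Bregman continuity property holds: for all bounded sequences (u^k), (v^k) in ℝ^N, u^k − v^k → 0 if and only if D_{h_k}(u^k, v^k) → 0. Then ŷ^k − x̂^k → 0, x^k − x̂^k → 0, and x^k − ŷ^k → 0 as k → ∞. -/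
open scoped RealInnerProductSpace
open Filter Topology

lemma grad_tendsto {N : ℕ} (h : EuclideanSpace ℝ (Fin N) → ℝ) (hd : Differentiable ℝ h)
    (u d : EuclideanSpace ℝ (Fin N)) :
    Tendsto (fun t : ℝ => t⁻¹ * (h (u + t • d) - h u)) (𝓝[>] (0:ℝ)) (𝓝 ⟪gradient h u, d⟫) := by
  have h1 := ((hd u).hasGradientAt.hasFDerivAt).hasLineDerivAt d
  have h2 : HasDerivAt (fun t : ℝ => h (u + t • d)) ⟪gradient h u, d⟫ 0 := by
    simpa [HasLineDerivAt] using h1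
  have h3 := h2.tendsto_slope_zero_right
  simpa using h3

lemma grad_lower {N : ℕ} (h : EuclideanSpace ℝ (Fin N) → ℝ) (hd : Differentiable ℝ h)
    (u d : EuclideanSpace ℝ (Fin N)) (c : ℝ)
    (hc : ∀ t : ℝ, 0 < t → t < 1 → t * c ≤ h (u + t • d) - h u) :
    c ≤ ⟪gradient h u, d⟫ := by
  refine ge_of_tendsto (grad_tendsto h hd u d) ?_
  filter_upwards [Ioo_mem_nhdsGT (zero_lt_one (α := ℝ))] with t ht
  rw [le_inv_mul_iff₀ ht.1]
  exact hc t ht.1 ht.2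

lemma grad_upper {N : ℕ} (h : EuclideanSpace ℝ (Fin N) → ℝ) (hd : Differentiable ℝ h)
    (u d : EuclideanSpace ℝ (Fin N)) (c : ℝ)
    (hc : ∀ t : ℝ, 0 < t → t < 1 → h (u + t • d) - h u ≤ t * c) :
    ⟪gradient h u, d⟫ ≤ c := by
  refine le_of_tendsto (grad_tendsto h hd u d) ?_
  filter_upwards [Ioo_mem_nhdsGT (zero_lt_one (α := ℝ))] with t ht
  rw [inv_mul_le_iff₀ ht.1]
  exact hc t ht.1 ht.2

lemma breg_nonneg {N : ℕ} (h : EuclideanSpace ℝ (Fin N) → ℝ) (hd : Differentiable ℝ h)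
    (hc : ConvexOn ℝ Set.univ h) (z u : EuclideanSpace ℝ (Fin N)) : 0 ≤ breg h z u := by
  have := grad_upper h hd u (z - u) (h z - h u) (by
    intro t h0 h1
    have := hc.2 (Set.mem_univ u) (Set.mem_univ z) (sub_nonneg.2 h1.le) h0.le (by ring)
    have e : u + t • (z - u) = (1 - t) • u + t • z := by module
    rw [e]
    simp only [smul_eq_mul] at this
    linarith)
  unfold breg
  linarith

lemma breg_mono {N : ℕ} (h : EuclideanSpace ℝ (Fin N) → ℝ) (hd : Differentiable ℝ h)
    (hc : ConvexOn ℝ Set.univ h) (y w : EuclideanSpace ℝ (Fin N)) (s : ℝ) (h0 : 0 ≤ s)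
    (h1 : s ≤ 1) : breg h y (y + s • (w - y)) ≤ breg h y w := by
  rcases h1.eq_or_lt with rfl | h1
  · simp
  have a := breg_nonneg h hd hc (y + s • (w - y)) w
  have b := breg_nonneg h hd hc w (y + s • (w - y))
  unfold breg at *
  set v := y + s • (w - y) with hv
  have e1 : v - w = (-(1 - s)) • (w - y) := by rw [hv]; module
  have e2 : w - v = (1 - s) • (w - y) := by rw [hv]; module
  have e3 : y - v = (-s) • (w - y) := by rw [hv]; module
  have e4 : y - w = (-1 : ℝ) • (w - y) := by module
  rw [e1] at a
  rw [e2] at b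
  rw [e3, e4]
  simp only [inner_smul_right] at *
  have : 0 ≤ ⟪gradient h w, w - y⟫ - ⟪gradient h v, w - y⟫ := by
    by_contra hcon
    push Not at hcon
    nlinarith
  nlinarith

lemma gap_of_breg {N : ℕ} (h : ℕ → EuclideanSpace ℝ (Fin N) → ℝ)
    (hhconv : ∀ k, ConvexOn ℝ Set.univ (h k)) (hhdiff : ∀ k, Differentiable ℝ (h k))
    (hbregcont : ∀ u v : ℕ → EuclideanSpace ℝ (Fin N),
      (∃ C, ∀ k, ‖u k‖ ≤ C) → (∃ C, ∀ k, ‖v k‖ ≤ C) →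
      (Tendsto (fun k => u k - v k) atTop (𝓝 0) ↔
        Tendsto (fun k => breg (h k) (u k) (v k)) atTop (𝓝 0)))
    (u w : ℕ → EuclideanSpace ℝ (Fin N)) (hu : ∃ C, ∀ k, ‖u k‖ ≤ C)
    (hD : Tendsto (fun k => breg (h k) (u k) (w k)) atTop (𝓝 0)) :
    Tendsto (fun k => u k - w k) atTop (𝓝 0) := by
  let s : ℕ → ℝ := fun k => min 1 (‖w k - u k‖)⁻¹
  have s0 : ∀ k, 0 ≤ s k := fun k => le_min zero_le_one (by positivity)
  have s1 : ∀ k, s k ≤ 1 := fun k => min_le_left _ _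
  let v : ℕ → EuclideanSpace ℝ (Fin N) := fun k => u k + s k • (w k - u k)
  have hvb : ∃ C, ∀ k, ‖v k‖ ≤ C := by
    obtain ⟨C, hC⟩ := hu
    refine ⟨C + 1, fun k => (norm_add_le _ _).trans (add_le_add (hC k) ?_)⟩
    rw [norm_smul, Real.norm_of_nonneg (s0 k)]
    calc s k * ‖w k - u k‖ ≤ (‖w k - u k‖)⁻¹ * ‖w k - u k‖ :=
          mul_le_mul_of_nonneg_right (min_le_right _ _) (norm_nonneg _)
      _ ≤ 1 := inv_mul_le_one
  have hv := (hbregcont u v hu hvb).2 (squeeze_zero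
    (fun k => breg_nonneg _ (hhdiff k) (hhconv k) _ _)
    (fun k => breg_mono _ (hhdiff k) (hhconv k) (u k) (w k) (s k) (s0 k) (s1 k)) hD)
  refine hv.congr' ?_
  have hn : ∀ᶠ k in atTop, ‖u k - v k‖ < 1 := by
    have := hv.norm
    rw [norm_zero] at this
    exact this.eventually (gt_mem_nhds zero_lt_one)
  filter_upwards [hn] with k hk
  have e : u k - v k = (-(s k)) • (w k - u k) := by
    simp only [v]; module
  rw [e, norm_smul, norm_neg, Real.norm_of_nonneg (s0 k)] at hk
  by_cases hz : ‖w k - u k‖ = 0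
  · rw [norm_eq_zero] at hz
    rw [e, hz, ← neg_sub (w k), hz]; simp
  have : s k = 1 := by
    rcases min_choice 1 (‖w k - u k‖)⁻¹ with hh | hh
    · exact hh
    · exfalso
      have : s k = (‖w k - u k‖)⁻¹ := hh
      rw [this, inv_mul_cancel₀ hz] at hk
      exact lt_irrefl _ hk
  rw [e, this]; module

lemma three_point {N : ℕ} (h : EuclideanSpace ℝ (Fin N) → ℝ) (hd : Differentiable ℝ h)
    (m : EuclideanSpace ℝ (Fin N) → EReal) (hm : ERealConvex m)
    (p x u : EuclideanSpace ℝ (Fin N))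
    (hmin : ∀ u, m p + ((breg h p x : ℝ) : EReal) ≤ m u + ((breg h u x : ℝ) : EReal))
    (a b : ℝ) (ha : m p = a) (hb : m u = b) :
    a + breg h p x + breg h u p ≤ b + breg h u x := by
  have key := grad_lower h hd p (u - p) (a - b + ⟪gradient h x, u - p⟫) (by
    intro t h0 h1
    have c := hm p u (1 - t) t (sub_nonneg.2 h1.le) h0.le (by ring)
    have e : p + t • (u - p) = (1 - t) • p + t • u := by module
    have q := (hmin (p + t • (u - p))).trans
      (add_le_add_left (e ▸ c) _)
    rw [ha, hb] at q
    norm_cast at q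
    have e2 : p + t • (u - p) - x = (p - x) + t • (u - p) := by module
    unfold breg at q
    rw [e2, inner_add_right, inner_smul_right] at q
    linarith)
  have e3 : u - x = (u - p) + (p - x) := by module
  unfold breg
  rw [e3, inner_add_right]
  linarith

/-- **Vanishing distances between iterates, inexact and exact proximal points.** -/
theorem iterate_gaps_vanish (N : ℕ)
    (f : EuclideanSpace ℝ (Fin N) → EReal)
    (hfbot : ∀ z, f z ≠ ⊥) (hfproper : ∃ z, f z ≠ ⊤)
    (hfclosed : LowerSemicontinuous f) (hfinf : ⊥ < ⨅ z, f z)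
    (x yh xh : ℕ → EuclideanSpace ℝ (Fin N))
    (h : ℕ → EuclideanSpace ℝ (Fin N) → ℝ)
    (hhconv : ∀ k, ConvexOn ℝ Set.univ (h k)) (hhdiff : ∀ k, Differentiable ℝ (h k))
    (m : ℕ → EuclideanSpace ℝ (Fin N) → EReal)
    (hmbot : ∀ k z, m k z ≠ ⊥) (hmproper : ∀ k, ∃ z, m k z ≠ ⊤)
    (hmclosed : ∀ k, LowerSemicontinuous (m k)) (hmconv : ∀ k, ERealConvex (m k))
    (ω : ℝ → ℝ) (hω0 : ω 0 = 0) (hωnn : ∀ t, 0 ≤ t → 0 ≤ ω t)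
    (hωgrowth : Tendsto (fun t => ω t / t) (𝓝[>] (0:ℝ)) (𝓝 0))
    (hmodel : ∀ k z, f z - m k z ≤ ((ω ‖z - x k‖ : ℝ) : EReal) ∧
                     m k z - f z ≤ ((ω ‖z - x k‖ : ℝ) : EReal))
    (hmin : ∀ k u, m k (xh k) + ((breg (h k) (xh k) (x k) : ℝ) : EReal) ≤
                   m k u + ((breg (h k) u (x k) : ℝ) : EReal))
    -- (i) boundedness
    (hxbdd : ∃ C, ∀ k, ‖x k‖ ≤ C) (hybdd : ∃ C, ∀ k, ‖yh k‖ ≤ C)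
    -- (ii) inexactness vanishes
    (ε : ℕ → ℝ) (hε : Tendsto ε atTop (𝓝 0))
    (hinexact : ∀ k, m k (yh k) + ((breg (h k) (yh k) (x k) : ℝ) : EReal) ≤
      m k (xh k) + ((breg (h k) (xh k) (x k) : ℝ) : EReal) + ((ε k : ℝ) : EReal))
    -- (iii) model improvement vanishes
    (Δ : ℕ → ℝ)
    (hΔdef : ∀ k, ((Δ k : ℝ) : EReal) =
      m k (yh k) + ((breg (h k) (yh k) (x k) : ℝ) : EReal) - f (x k))
    (hΔ : Tendsto Δ atTop (𝓝 0))
    -- (iv) Bregman continuity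
    (hbregcont : ∀ u v : ℕ → EuclideanSpace ℝ (Fin N),
      (∃ C, ∀ k, ‖u k‖ ≤ C) → (∃ C, ∀ k, ‖v k‖ ≤ C) →
      (Tendsto (fun k => u k - v k) atTop (𝓝 0) ↔
        Tendsto (fun k => breg (h k) (u k) (v k)) atTop (𝓝 0))) :
    Tendsto (fun k => yh k - xh k) atTop (𝓝 0) ∧
    Tendsto (fun k => x k - xh k) atTop (𝓝 0) ∧
    Tendsto (fun k => x k - yh k) atTop (𝓝 0) := by
  have hF : ∀ k, ∃ a b c : ℝ, m k (yh k) = a ∧ f (x k) = b ∧ m k (x k) = b ∧ m k (xh k) = c := by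
    intro k
    have hd := hΔdef k
    have hfx : f (x k) ≠ ⊤ := by
      intro hh
      rw [hh, EReal.sub_top] at hd
      exact EReal.coe_ne_bot _ hd
    obtain ⟨b, hb⟩ : ∃ b : ℝ, f (x k) = b :=
      ⟨_, (EReal.coe_toReal hfx (hfbot _)).symm⟩
    have hmy : m k (yh k) ≠ ⊤ := by
      intro hh
      rw [hh, hb, EReal.top_add_coe, EReal.top_sub_coe] at hd
      exact EReal.coe_ne_top _ hd
    obtain ⟨a, ha⟩ : ∃ a : ℝ, m k (yh k) = a :=
      ⟨_, (EReal.coe_toReal hmy (hmbot _ _)).symm⟩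
    have hmx : m k (xh k) ≠ ⊤ := by
      intro hh
      have := hmin k (yh k)
      rw [hh, ha, EReal.top_add_coe, ← EReal.coe_add] at this
      exact EReal.coe_ne_top _ (top_le_iff.1 this)
    obtain ⟨c, hc⟩ : ∃ a : ℝ, m k (xh k) = a :=
      ⟨_, (EReal.coe_toReal hmx (hmbot _ _)).symm⟩
    have hmo := hmodel k (x k)
    rw [sub_self, norm_zero, hω0, hb] at hmo
    have hmxx : m k (x k) ≠ ⊤ := by
      intro hh
      have := hmo.2
      rw [hh, EReal.top_sub_coe] at this
      exact EReal.coe_ne_top _ (top_le_iff.1 this)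
    obtain ⟨d, hdd⟩ : ∃ a : ℝ, m k (x k) = a :=
      ⟨_, (EReal.coe_toReal hmxx (hmbot _ _)).symm⟩
    rw [hdd] at hmo
    norm_cast at hmo
    have : d = b := by linarith [hmo.1, hmo.2]
    exact ⟨a, b, c, ha, hb, this ▸ hdd, hc⟩
  choose a b c ha hb hmx hc using hF
  have hbx : ∀ k, breg (h k) (x k) (x k) = 0 := fun k => by simp [breg]
  have i1 : ∀ k, a k + breg (h k) (yh k) (x k) ≤ c k + breg (h k) (xh k) (x k) + ε k := by
    intro k
    have := hinexact k
    rw [ha, hc] at this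
    exact_mod_cast this
  have i2 : ∀ k, Δ k = a k + breg (h k) (yh k) (x k) - b k := by
    intro k
    have := hΔdef k
    rw [ha, hb] at this
    exact_mod_cast this
  have i3 : ∀ k, c k + breg (h k) (xh k) (x k) + breg (h k) (x k) (xh k) ≤ b k := by
    intro k
    have := three_point (h k) (hhdiff k) (m k) (hmconv k) (xh k) (x k) (x k) (hmin k) _ _
      (hc k) (hmx k)
    rw [hbx] at this
    linarith
  have i4 : ∀ k, c k + breg (h k) (xh k) (x k) + breg (h k) (yh k) (xh k)
      ≤ a k + breg (h k) (yh k) (x k) := fun k =>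
    three_point (h k) (hhdiff k) (m k) (hmconv k) (xh k) (x k) (yh k) (hmin k) _ _
      (hc k) (ha k)
  have t1 : Tendsto (fun k => yh k - xh k) atTop (𝓝 0) := by
    refine gap_of_breg h hhconv hhdiff hbregcont yh xh hybdd (squeeze_zero
      (fun k => breg_nonneg _ (hhdiff k) (hhconv k) _ _) (fun k => ?_) hε)
    linarith [i1 k, i4 k]
  have t2 : Tendsto (fun k => x k - xh k) atTop (𝓝 0) := by
    have hl : Tendsto (fun k => ε k - Δ k) atTop (𝓝 0) := by simpa using hε.sub hΔ
    refine gap_of_breg h hhconv hhdiff hbregcont x xh hxbdd (squeeze_zero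
      (fun k => breg_nonneg _ (hhdiff k) (hhconv k) _ _) (fun k => ?_) hl)
    linarith [i1 k, i2 k, i3 k]
  refine ⟨t1, t2, ?_⟩
  simpa using t2.sub t1
end

section
/- Let f : ℝ^N → (−∞,∞], x̄ ∈ dom f, let h : ℝ^N → ℝ be convex and differentiable, and let m : ℝ^N → (−∞,∞] be proper, closed and convex with |f(x) − m(x)| ≤ L·D_h(x, x̄) for all x ∈ ℝ^N, where L > 0. Let α > 0 and let x̂ be a global minimizer of u ↦ m(u) + (1/α)·D_h(u, x̄). Suppose ρ ≥ 0 is a Bregman symmetry factor for h, i.e. D_h(u, v) ≥ ρ·D_h(v, u) for all u, v ∈ ℝ^N. Then the descent estimate ((1 + ρ − αL)/α)·D_h(x̂, x̄) ≤ f(x̄) − f(x̂) holds; in particular, for α ∈ (0, (1+ρ)/L) the left-hand side is nonnegative. -/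
open scoped RealInnerProductSpace
open Filter Topology

lemma aux_deriv_nonneg (g : ℝ → ℝ) (c : ℝ) (hg : HasDerivAt g c 0)
    (hpos : ∀ t, 0 < t → t < 1 → g 0 ≤ g t) : 0 ≤ c := by
  have h1 := hg.tendsto_slope_zero_right
  refine ge_of_tendsto h1 ?_
  have : Set.Ioo (0:ℝ) 1 ∈ 𝓝[>] (0:ℝ) := Ioo_mem_nhdsGT one_pos
  filter_upwards [this] with t ht
  have := hpos t ht.1 ht.2
  simp only [zero_add, smul_eq_mul]
  exact mul_nonneg (inv_nonneg.2 ht.1.le) (by linarith)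

lemma aux_line {N : ℕ} (h : EuclideanSpace ℝ (Fin N) → ℝ) (hd : Differentiable ℝ h)
    (x d : EuclideanSpace ℝ (Fin N)) :
    HasDerivAt (fun t : ℝ => h (x + t • d)) ⟪gradient h x, d⟫ 0 := by
  have h1 : HasFDerivAt h (InnerProductSpace.toDual ℝ _ (gradient h x)) (x + (0:ℝ) • d) := by
    simpa using (hd x).hasGradientAt.hasFDerivAt
  have h2 : HasDerivAt (fun t : ℝ => x + t • d) d 0 := by
    simpa using ((hasDerivAt_id (0:ℝ)).smul_const d).const_add x
  exact h1.comp_hasDerivAt (0:ℝ) h2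

lemma aux_breg_nonneg {N : ℕ} (h : EuclideanSpace ℝ (Fin N) → ℝ)
    (hc : ConvexOn ℝ Set.univ h) (hd : Differentiable ℝ h)
    (x u : EuclideanSpace ℝ (Fin N)) : 0 ≤ breg h x u := by
  have hl := aux_line h hd u (x - u)
  have h2 := ((hasDerivAt_id (0:ℝ)).mul_const (h x - h u)).sub hl
  have := aux_deriv_nonneg _ _ h2 (by
    intro t ht0 ht1
    have := hc.2 (Set.mem_univ u) (Set.mem_univ x) (by linarith : 0 ≤ 1 - t) ht0.le (by ring)
    have e : (1 - t) • u + t • x = u + t • (x - u) := by module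
    rw [e] at this
    simp only [smul_eq_mul] at this
    simp
    linarith)
  unfold breg
  linarith

/-- **Descent property under a global model error bound (exact proximal points).** If
`|f − m| ≤ L·D_h(·, x̄)`, `x̂` globally minimizes `u ↦ m u + (1/α)·D_h(u, x̄)`, and `ρ ≥ 0`
is a Bregman symmetry factor for `h` (i.e. `D_h(u,v) ≥ ρ·D_h(v,u)`), then
`((1 + ρ − αL)/α)·D_h(x̂, x̄) ≤ f x̄ − f x̂`; in particular the left-hand side is
nonnegative for `α ∈ (0, (1+ρ)/L)`. -/
theorem descent_property_global_model_exact (N : ℕ)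
    (f : EuclideanSpace ℝ (Fin N) → EReal) (hfbot : ∀ z, f z ≠ ⊥)
    (xb : EuclideanSpace ℝ (Fin N)) (hxb : f xb ≠ ⊤)
    (h : EuclideanSpace ℝ (Fin N) → ℝ)
    (hhconv : ConvexOn ℝ Set.univ h) (hhdiff : Differentiable ℝ h)
    (m : EuclideanSpace ℝ (Fin N) → EReal)
    (hmbot : ∀ z, m z ≠ ⊥) (hmproper : ∃ z, m z ≠ ⊤)
    (hmclosed : LowerSemicontinuous m) (hmconv : ERealConvex m)
    (L : ℝ) (hL : 0 < L)
    (hmodel : ∀ z, f z - m z ≤ ((L * breg h z xb : ℝ) : EReal) ∧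
                   m z - f z ≤ ((L * breg h z xb : ℝ) : EReal))
    (α : ℝ) (hα : 0 < α)
    (xh : EuclideanSpace ℝ (Fin N))
    (hmin : ∀ u, m xh + (((1/α) * breg h xh xb : ℝ) : EReal) ≤
                 m u + (((1/α) * breg h u xb : ℝ) : EReal))
    (ρ : ℝ) (hρ : 0 ≤ ρ)
    (hsym : ∀ u v, ρ * breg h v u ≤ breg h u v) :
    ((((1 + ρ - α * L) / α) * breg h xh xb : ℝ) : EReal) ≤ f xb - f xh ∧
      (α < (1 + ρ) / L → 0 ≤ ((1 + ρ - α * L) / α) * breg h xh xb) := by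
  have hD := aux_breg_nonneg h hhconv hhdiff xh xb
  have hb0 : breg h xb xb = 0 := by simp [breg]
  constructor
  swap
  · intro hlt
    rw [lt_div_iff₀ hL] at hlt
    exact mul_nonneg (div_nonneg (by linarith) hα.le) hD
  obtain ⟨F, hF⟩ : ∃ r : ℝ, f xb = r := ⟨_, (EReal.coe_toReal hxb (hfbot xb)).symm⟩
  have hmb : m xb ≠ ⊤ := by
    intro ht
    have := (hmodel xb).2
    rw [ht, hF, EReal.top_sub_coe] at this
    exact EReal.coe_ne_top _ (top_le_iff.1 this)
  obtain ⟨B, hB⟩ : ∃ r : ℝ, m xb = r := ⟨_, (EReal.coe_toReal hmb (hmbot xb)).symm⟩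
  have hBF : B ≤ F := by
    have := (hmodel xb).2
    rw [hB, hF, hb0] at this
    norm_cast at this
    linarith
  have hmh : m xh ≠ ⊤ := by
    intro ht
    have := hmin xb
    rw [ht, hB, EReal.top_add_coe, ← EReal.coe_add] at this
    exact EReal.coe_ne_top _ (top_le_iff.1 this)
  obtain ⟨M, hM⟩ : ∃ r : ℝ, m xh = r := ⟨_, (EReal.coe_toReal hmh (hmbot xh)).symm⟩
  have hfh : f xh ≠ ⊤ := by
    intro ht
    have := (hmodel xh).1
    rw [ht, hM, EReal.top_sub_coe] at this
    exact EReal.coe_ne_top _ (top_le_iff.1 this)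
  obtain ⟨G, hG⟩ : ∃ r : ℝ, f xh = r := ⟨_, (EReal.coe_toReal hfh (hfbot xh)).symm⟩
  have hGM : G - M ≤ L * breg h xh xb := by
    have := (hmodel xh).1
    rw [hG, hM] at this
    exact_mod_cast this
  have key : ∀ t : ℝ, 0 < t → t < 1 →
      α * (t * (M - B)) ≤ breg h (xh + t • (xb - xh)) xb - breg h xh xb := by
    intro t ht0 ht1
    have h1 := hmconv xh xb (1 - t) t (by linarith) ht0.le (by ring)
    have e : (1 - t) • xh + t • xb = xh + t • (xb - xh) := by module
    rw [e, hM, hB] at h1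
    have h2 := (hmin (xh + t • (xb - xh))).trans (add_le_add_left h1 _)
    rw [hM] at h2
    have h3 : M + (1/α) * breg h xh xb ≤
      (1 - t) * M + t * B + (1/α) * breg h (xh + t • (xb - xh)) xb := by exact_mod_cast h2
    have h4 : t * (M - B) ≤ (breg h (xh + t • (xb - xh)) xb - breg h xh xb) / α := by
      rw [sub_div]
      rw [one_div_mul_eq_div, one_div_mul_eq_div] at h3
      linarith
    rw [le_div_iff₀ hα] at h4
    linarith
  have hl := aux_line h hhdiff xh (xb - xh)
  have hder := (hl.sub ((hasDerivAt_id (0:ℝ)).mul_const ⟪gradient h xb, xb - xh⟫)).sub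
    ((hasDerivAt_id (0:ℝ)).mul_const (α * (M - B)))
  have hfin := aux_deriv_nonneg _ _ hder (by
    intro t ht0 ht1
    have := key t ht0 ht1
    have e : xh + t • (xb - xh) - xb = (xh - xb) + t • (xb - xh) := by module
    simp only [breg, e, inner_add_right, inner_smul_right] at this
    simp only [Pi.sub_apply, id, zero_smul, add_zero, zero_mul, sub_zero]
    linarith)
  have hs := hsym xb xh
  have hthree : breg h xh xb + breg h xb xh =
      ⟪gradient h xb, xb - xh⟫ - ⟪gradient h xh, xb - xh⟫ := by
    have e : xh - xb = -(xb - xh) := by abel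
    simp only [breg, e, inner_neg_right]
    ring
  rw [hF, hG, ← EReal.coe_sub, EReal.coe_le_coe_iff]
  have e : (1 + ρ - α * L) / α * breg h xh xb =
      ((1 + ρ) * breg h xh xb) / α - L * breg h xh xb := by
    field_simp
  have h5 : ((1 + ρ) * breg h xh xb) / α ≤ B - M := by
    rw [div_le_iff₀ hα]
    linarith
  rw [e]
  linarith
end

section
/- Let f : ℝ^N → (−∞,∞] be proper and closed, let h : ℝ^N → ℝ be convex and differentiable, let x̄ ∈ dom f, and let m : ℝ^N → (−∞,∞] be proper, closed and convex with 0 ≤ f(x) − m(x) ≤ L·D_h(x, x̄) for all x ∈ ℝ^N, where L > 0. Let 0 < α ≤ 1/L and let x̂ be a global minimizer of u ↦ m(u) + (1/α)·D_h(u, x̄). Then for every x ∈ dom f: f(x̂) − f(x) ≤ (1/α)·(D_h(x, x̄) − D_h(x, x̂)). -/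
open scoped RealInnerProductSpace
open Filter Topology

/-- **Key inequality in the convex setting.** If `0 ≤ f − m ≤ L·D_h(·, x̄)`,
`0 < α ≤ 1/L`, and `x̂` globally minimizes `u ↦ m u + (1/α)·D_h(u, x̄)`, then for every
`x ∈ dom f`: `f x̂ − f x ≤ (1/α)·(D_h(x, x̄) − D_h(x, x̂))`. -/
theorem convex_descent_relation (N : ℕ)
    (f : EuclideanSpace ℝ (Fin N) → EReal)
    (hfbot : ∀ z, f z ≠ ⊥) (hfproper : ∃ z, f z ≠ ⊤)
    (hfclosed : LowerSemicontinuous f)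
    (h : EuclideanSpace ℝ (Fin N) → ℝ)
    (hhconv : ConvexOn ℝ Set.univ h) (hhdiff : Differentiable ℝ h)
    (xb : EuclideanSpace ℝ (Fin N)) (hxb : f xb ≠ ⊤)
    (m : EuclideanSpace ℝ (Fin N) → EReal)
    (hmbot : ∀ z, m z ≠ ⊥) (hmproper : ∃ z, m z ≠ ⊤)
    (hmclosed : LowerSemicontinuous m) (hmconv : ERealConvex m)
    (L : ℝ) (hL : 0 < L)
    (hmodel : ∀ z, m z ≤ f z ∧ f z - m z ≤ ((L * breg h z xb : ℝ) : EReal))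
    (α : ℝ) (hα0 : 0 < α) (hα1 : α ≤ 1 / L)
    (xh : EuclideanSpace ℝ (Fin N))
    (hmin : ∀ u, m xh + (((1/α) * breg h xh xb : ℝ) : EReal) ≤
                 m u + (((1/α) * breg h u xb : ℝ) : EReal)) :
    ∀ x, f x ≠ ⊤ →
      f xh - f x ≤ (((1/α) * (breg h x xb - breg h x xh) : ℝ) : EReal) := by
  intro x hx
  have hmx : m x ≠ ⊤ := fun hh => hx (top_le_iff.1 (hh ▸ (hmodel x).1))
  have hmxb : m xb ≠ ⊤ := fun hh => hxb (top_le_iff.1 (hh ▸ (hmodel xb).1))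
  have hmxh : m xh ≠ ⊤ := by
    intro hh
    have h1 := hmin xb
    rw [hh, EReal.top_add_coe, top_le_iff] at h1
    exact (EReal.add_ne_top hmxb (EReal.coe_ne_top _)) h1
  have hfxh : f xh ≠ ⊤ := by
    intro hh
    have h1 := (hmodel xh).2
    lift m xh to ℝ using ⟨hmxh, hmbot xh⟩ with a
    rw [hh, EReal.top_sub_coe, top_le_iff] at h1
    exact EReal.coe_ne_top _ h1
  obtain ⟨hm1, hm2⟩ := hmodel xh
  have hm3 := (hmodel x).1
  have hkey : ∀ t : ℝ, 0 < t → t ≤ 1 → t * ((m xh).toReal - (m x).toReal) ≤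
      (1/α) * (breg h (xh + t • (x - xh)) xb - breg h xh xb) := by
    intro t ht0 ht1
    have h1 := hmin (xh + t • (x - xh))
    have h2 := hmconv xh x (1 - t) t (by linarith) ht0.le (by ring)
    have h3 : (1 - t) • xh + t • x = xh + t • (x - xh) := by module
    rw [h3] at h2
    have h4 := h1.trans (add_le_add_left h2 _)
    lift m xh to ℝ using ⟨hmxh, hmbot xh⟩ with a
    lift m x to ℝ using ⟨hmx, hmbot x⟩ with b
    norm_cast at h4
    simp only [EReal.toReal_coe]
    linarith
  have hgrad : HasDerivAt (fun t : ℝ => (1/α) * breg h (xh + t • (x - xh)) xb)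
      ((1/α) * (⟪gradient h xh, x - xh⟫ - ⟪gradient h xb, x - xh⟫)) 0 := by
    have hl : HasDerivAt (fun t : ℝ => xh + t • (x - xh)) (x - xh) 0 := by
      simpa using ((hasDerivAt_id (0:ℝ)).smul_const (x - xh)).const_add xh
    have hg : HasFDerivAt h (InnerProductSpace.toDual ℝ _ (gradient h xh))
        (xh + (0:ℝ) • (x - xh)) := by
      have := (hhdiff xh).hasGradientAt.hasFDerivAt
      simpa using this
    have h1 := hg.comp_hasDerivAt (0:ℝ) hl
    have h2 : HasDerivAt (fun t : ℝ => ⟪gradient h xb, xh + t • (x - xh) - xb⟫)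
        ⟪gradient h xb, x - xh⟫ 0 := by
      simpa using (hasDerivAt_const (0:ℝ) (gradient h xb)).inner ℝ (hl.sub_const xb)
    have h3 := ((h1.sub_const (h xb)).sub h2).const_mul (1/α)
    simpa [breg] using h3
  have hle : (m xh).toReal - (m x).toReal ≤
      (1/α) * (⟪gradient h xh, x - xh⟫ - ⟪gradient h xb, x - xh⟫) := by
    refine ge_of_tendsto hgrad.tendsto_slope_zero_right ?_
    filter_upwards [Ioc_mem_nhdsGT (zero_lt_one' ℝ)] with t ht
    have := hkey t ht.1 ht.2
    simp only [zero_add, zero_smul, add_zero, smul_eq_mul]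
    rw [inv_mul_eq_div, le_div_iff₀ ht.1]
    linarith
  have hid : breg h x xb - breg h xh xb - breg h x xh =
      ⟪gradient h xh, x - xh⟫ - ⟪gradient h xb, x - xh⟫ := by
    simp only [breg, inner_sub_right]; ring
  rw [← hid] at hle
  clear hmin hkey hmodel hmconv hmclosed hfclosed
  lift m xh to ℝ using ⟨hmxh, hmbot xh⟩ with a
  lift m x to ℝ using ⟨hmx, hmbot x⟩ with b
  lift f xh to ℝ using ⟨hfxh, hfbot xh⟩ with c
  lift f x to ℝ using ⟨hx, hfbot x⟩ with d
  norm_cast at hm1 hm2 hm3 ⊢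
  simp only [EReal.toReal_coe] at hle
  have hD : 0 ≤ breg h xh xb := nonneg_of_mul_nonneg_right (by linarith) hL
  have hLa : L ≤ 1/α := by
    rw [le_div_iff₀ hα0]; rw [le_div_iff₀ hL] at hα1; linarith
  have := mul_le_mul_of_nonneg_right hLa hD
  linarith
end
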